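/- Let r, k be integers with r ≥ 1 and k ≥ −1, and let G be an undirected graph without loops. If the polyhedral complex Hom(C_{2r+1}, G) is k-connected, then the chromatic number of G satisfies χ(G) ≥ k + 4. -/

import Mathlib

open Finset

noncomputable section
namespace Lovasz




structure Graph where
  V : Type
  fintypeV : Fintype V
  adj : V → V → Prop
  symm : ∀ {x y : V}, adj x y → adj y x

attribute [instance] Graph.fintypeV

def Graph.Loopless (G : Graph) : Prop := ∀ v : G.V, ¬ G.adj v v

def GraphHom (G H : Graph) : Type :=
  {f : G.V → H.V // ∀ x y : G.V, G.adj x y → H.adj (f x) (f y)}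

@[reducible] def completeGraph (n : ℕ) : Graph where
  V := Fin n
  fintypeV := inferInstance
  adj x y := x ≠ y
  symm h := h.symm

def chromaticNumber (G : Graph) : ℕ :=
  sInf {n : ℕ | Nonempty (GraphHom G (completeGraph n))}

@[reducible] def oddCycle (r : ℕ) : Graph where
  V := ZMod (2 * r + 1)
  fintypeV := inferInstance
  adj x y := x = y + 1 ∨ y = x + 1
  symm h := h.symm

/-- The cycle with `m` vertices (trivial graph for `m = 0`). -/
@[reducible] def cycleGraph : ℕ → Graph
  | 0 => ⟨Empty, inferInstance, fun _ _ => False, fun h => h⟩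
  | (n+1) =>
    { V := ZMod (n+1)
      fintypeV := inferInstance
      adj := fun x y => x = y + 1 ∨ y = x + 1
      symm := fun h => h.symm }

/-- The geometric realization of the polyhedral complex `Hom(G,H)`: the space of functions
assigning to each vertex of `G` a probability distribution on `V(H)`, such that any choice of
vertices from the supports yields a graph homomorphism. -/
abbrev HomComplex (G H : Graph) : Type :=
  {f : G.V → H.V → ℝ //
    (∀ v w, 0 ≤ f v w) ∧ (∀ v, ∑ w, f v w = 1) ∧
    ∀ x y : G.V, G.adj x y → ∀ a b : H.V, f x a ≠ 0 → f y b ≠ 0 → H.adj a b}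

/-- The geometric realization of the simplicial complex `Hom₊(G,H)`. -/
abbrev HomPlus (G H : Graph) : Type :=
  {f : G.V → H.V → ℝ //
    (∀ v w, 0 ≤ f v w) ∧ (∑ v, ∑ w, f v w = 1) ∧
    ∀ x y : G.V, G.adj x y → ∀ a b : H.V, f x a ≠ 0 → f y b ≠ 0 → H.adj a b}

/-- The geometric realization of the independence complex `Ind(G)`. -/
abbrev IndSpace (G : Graph) : Type :=
  {f : G.V → ℝ //
    (∀ v, 0 ≤ f v) ∧ (∑ v, f v = 1) ∧
    ∀ x y : G.V, G.adj x y → f x = 0 ∨ f y = 0}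

/-- The map `Hom(G',H) → Hom(G,H)` induced by a graph homomorphism `ι : G → G'`. -/
def precompHom {G G' : Graph} (ι : GraphHom G G') (H : Graph) :
    C(HomComplex G' H, HomComplex G H) where
  toFun f := ⟨fun v w => f.1 (ι.1 v) w,
    fun v w => f.2.1 (ι.1 v) w,
    fun v => f.2.2.1 (ι.1 v),
    fun x y h a b ha hb => f.2.2.2 (ι.1 x) (ι.1 y) (ι.2 x y h) a b ha hb⟩
  continuous_toFun := by
    apply Continuous.subtype_mk
    apply continuous_pi; intro v
    apply continuous_pi; intro w
    exact (continuous_apply w).comp ((continuous_apply (ι.1 v)).comp continuous_subtype_val)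

/-- The map `Hom₊(G',H) → Hom₊(G,H)` induced by an *invertible* graph homomorphism is only used
for involutions, where precomposition preserves the normalization; for bijective `ι` the total
sum is preserved. -/
def precompHomPlus {G : Graph} (ι : GraphHom G G) (hbij : Function.Bijective ι.1) (H : Graph) :
    C(HomPlus G H, HomPlus G H) where
  toFun f := ⟨fun v w => f.1 (ι.1 v) w,
    fun v w => f.2.1 (ι.1 v) w,
    by
      show ∑ v, ∑ w, f.1 (ι.1 v) w = 1
      have h2 : ∑ v, ∑ w, f.1 (ι.1 v) w = ∑ v, ∑ w, f.1 v w :=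
        Fintype.sum_bijective ι.1 hbij _ _ (fun v => rfl)
      rw [h2]; exact f.2.2.1,
    fun x y h a b ha hb => f.2.2.2 (ι.1 x) (ι.1 y) (ι.2 x y h) a b ha hb⟩
  continuous_toFun := by
    apply Continuous.subtype_mk
    apply continuous_pi; intro v
    apply continuous_pi; intro w
    exact (continuous_apply w).comp ((continuous_apply (ι.1 v)).comp continuous_subtype_val)

lemma precompHom_invol {G : Graph} (γ : GraphHom G G) (hγ : ∀ v, γ.1 (γ.1 v) = v) (H : Graph) :
    ∀ f, precompHom γ H (precompHom γ H f) = f := by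
  intro f
  apply Subtype.ext
  funext v w
  show f.1 (γ.1 (γ.1 v)) w = f.1 v w
  rw [hγ]

lemma precompHomPlus_invol {G : Graph} (γ : GraphHom G G) (hbij : Function.Bijective γ.1)
    (hγ : ∀ v, γ.1 (γ.1 v) = v) (H : Graph) :
    ∀ f, precompHomPlus γ hbij H (precompHomPlus γ hbij H f) = f := by
  intro f
  apply Subtype.ext
  funext v w
  show f.1 (γ.1 (γ.1 v)) w = f.1 v w
  rw [hγ]

/-- The reflection `x ↦ -x` of the odd cycle. -/
def cycleReflect (r : ℕ) : GraphHom (oddCycle r) (oddCycle r) :=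
  ⟨fun x => (-x : ZMod (2 * r + 1)), by
    intro x y h
    change (x : ZMod (2 * r + 1)) = y + 1 ∨ y = x + 1 at h
    change (-x : ZMod (2 * r + 1)) = -y + 1 ∨ (-y : ZMod (2 * r + 1)) = -x + 1
    rcases h with h | h
    · right; rw [h]; ring
    · left; rw [h]; ring⟩

lemma cycleReflect_invol (r : ℕ) : ∀ v, (cycleReflect r).1 ((cycleReflect r).1 v) = v :=
  fun v => neg_neg (v : ZMod (2 * r + 1))

lemma cycleReflect_bijective (r : ℕ) : Function.Bijective (cycleReflect r).1 :=
  Function.Involutive.bijective (fun v => neg_neg (v : ZMod (2 * r + 1)))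

open scoped Topology in
/-- `k`-connectedness (`k ≥ -1`): nonempty, path-connected (when `k ≥ 0`), and all homotopy
groups `π_i` vanish for `1 ≤ i ≤ k`. -/
def KConnected (k : ℤ) (X : Type) [TopologicalSpace X] : Prop :=
  Nonempty X ∧ ((0:ℤ) ≤ k → PathConnectedSpace X) ∧
    ∀ i : ℕ, 1 ≤ i → (i : ℤ) ≤ k → ∀ x : X, Subsingleton (HomotopyGroup (Fin i) X x)

section Comb

abbrev ins {A : Type*} {n : ℕ} (j : Fin (n+1)) (a : A) (b : Fin n → A) : Fin (n+1) → A :=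
  Fin.insertNth (α := fun _ => A) j a b

lemma ins_swap {A : Type*} {n : ℕ} (j : Fin (n+2)) (i : Fin (n+1)) (x y : A) (b : Fin n → A) :
    ins (j.succAbove i) y (ins (i.predAbove j) x b) = ins j x (ins i y b) := by
  unfold ins
  rw [Fin.insertNth_eq_iff]
  constructor
  · simp
  · rw [Fin.insertNth_eq_iff]
    constructor
    · simp [Fin.removeNth, Fin.succAbove_succAbove_predAbove]
    · funext k
      simp [Fin.removeNth, Fin.succAbove_succAbove_succAbove_predAbove]

lemma ins_zero_succ {A : Type*} {n : ℕ} (a : A) (b : Fin n → A) (i : Fin n) :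
    ins 0 a b i.succ = b i := by simp [ins]

lemma two_eq (a : ZMod 2) : a + a = 0 := CharTwo.add_self_eq_zero a

variable {P : Type*}

def face {n : ℕ} (g : (Fin (n+1) → Bool) → P) (j : Fin (n+1)) (c : Bool) :
    (Fin n → Bool) → P := fun b => g (ins j c b)

lemma face_face {n : ℕ} (g : (Fin (n+2) → Bool) → P) (j : Fin (n+2)) (i : Fin (n+1))
    (c c' : Bool) :
    face (face g (j.succAbove i) c') (i.predAbove j) c = face (face g j c) i c' := by
  funext b
  simp only [face]
  rw [ins_swap]

def cob {n : ℕ} (β : ((Fin n → Bool) → P) → ZMod 2) (g : (Fin (n+1) → Bool) → P) : ZMod 2 :=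
  ∑ j, (β (face g j true) + β (face g j false))

lemma cob_cob {n : ℕ} (β : ((Fin n → Bool) → P) → ZMod 2) (g : (Fin (n+2) → Bool) → P) :
    cob (cob β) g = 0 := by
  unfold cob
  simp only [← Finset.sum_add_distrib]
  rw [← Finset.sum_product', Finset.univ_product_univ]
  refine Finset.sum_involution (fun x _ => (x.1.succAbove x.2, x.2.predAbove x.1)) ?_ ?_ ?_ ?_
  · rintro ⟨j, i⟩ _
    simp only [face_face]
    generalize β _ = a
    generalize β _ = b
    generalize β _ = c
    generalize β _ = d
    revert a b c d
    decide
  · rintro ⟨j, i⟩ _ _ h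
    exact Fin.succAbove_ne j i (congrArg Prod.fst h)
  · intros; exact Finset.mem_univ _
  · rintro ⟨j, i⟩ _
    simp [Fin.succAbove_succAbove_predAbove, Fin.predAbove_predAbove_succAbove]

def Wc (s : ℕ → P → ZMod 2) : (n : ℕ) → ((Fin n → Bool) → P) → ZMod 2
  | 0 => fun _ => 1
  | n+1 => cob (fun g => Wc s n g * s n (g fun _ => true))

def Al (s : ℕ → P → ZMod 2) (n : ℕ) (g : (Fin n → Bool) → P) : ZMod 2 :=
  Wc s n g * s n (g fun _ => true)

lemma Wc_succ (s : ℕ → P → ZMod 2) (n : ℕ) (g : (Fin (n+1) → Bool) → P) :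
    Wc s (n+1) g = cob (Al s n) g := rfl

lemma cob_Wc (s : ℕ → P → ZMod 2) : ∀ (n : ℕ) (g : (Fin (n+1) → Bool) → P),
    cob (Wc s n) g = 0
  | 0, g => by simp [cob, Wc, two_eq]
  | n+1, g => cob_cob _ g

lemma ins_true {n : ℕ} (j : Fin (n+1)) : ins j true (fun _ => true) = fun _ => true := by
  unfold ins
  rw [Fin.insertNth_eq_iff]
  exact ⟨rfl, rfl⟩

lemma Wc_formula (s : ℕ → P → ZMod 2) (n : ℕ) (g : (Fin (n+1) → Bool) → P) :
    Wc s (n+1) g = ∑ j, Wc s n (face g j false) *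
      (s n (g fun _ => true) + s n (g (ins j false fun _ => true))) := by
  have h := cob_Wc s n g
  have h2 : Wc s (n+1) g = cob (Wc s n) g * s n (g fun _ => true) + ∑ j, Wc s n (face g j false) *
      (s n (g fun _ => true) + s n (g (ins j false fun _ => true))) := by
    rw [Wc_succ]
    unfold cob
    rw [Finset.sum_mul, ← Finset.sum_add_distrib]
    refine Finset.sum_congr rfl fun j _ => ?_
    simp only [Al]
    have : face g j true (fun _ => true) = g fun _ => true := by
      simp only [face, ins_true]
    rw [this]
    show _ + _ * s n (g (ins j false fun _ => true)) = _
    generalize Wc s n (face g j true) = a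
    generalize Wc s n (face g j false) = b
    generalize s n _ = c
    generalize s n _ = d
    revert a b c d
    decide
  rw [h2, h, zero_mul, zero_add]

lemma Wc_support (s : ℕ → P → ZMod 2) : ∀ (n : ℕ) (g : (Fin n → Bool) → P), Wc s n g ≠ 0 →
    ∀ i < n, ∃ b b', s i (g b) ≠ s i (g b')
  | 0, g => fun _ i hi => absurd hi (Nat.not_lt_zero _)
  | n+1, g => fun h i hi => by
    rw [Wc_formula] at h
    obtain ⟨j, _, hj⟩ := Finset.exists_ne_zero_of_sum_ne_zero h
    have h1 := left_ne_zero_of_mul hj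
    have h2 := right_ne_zero_of_mul hj
    rcases Nat.lt_succ_iff_lt_or_eq.1 hi with hi | rfl
    · obtain ⟨b, b', hb⟩ := Wc_support s n _ h1 i hi
      exact ⟨_, _, hb⟩
    · refine ⟨fun _ => true, ins j false fun _ => true, fun he => h2 ?_⟩
      rw [he, two_eq]

lemma Wc_deg (s : ℕ → P → ZMod 2) : ∀ (n : ℕ) (g : (Fin (n+1) → Bool) → P),
    (∀ b c : Fin (n+1) → Bool, (∀ i : Fin n, b i.succ = c i.succ) → g b = g c) →
    Wc s (n+1) g = 0 := by
  intro n
  induction n with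
  | zero =>
    intro g hg
    have h0 : face g 0 true = face g 0 false := by
      funext b; exact hg _ _ (fun i => i.elim0)
    rw [Wc_succ]; simp [cob, h0, two_eq]
  | succ n ih =>
    intro g hg
    have h0 : face g 0 true = face g 0 false := by
      funext b; apply hg; intro i; rw [ins_zero_succ, ins_zero_succ]
    rw [Wc_succ]; unfold cob
    rw [Fin.sum_univ_succ, h0, two_eq, zero_add]
    refine Finset.sum_eq_zero fun j _ => ?_
    have key : ∀ c, Wc s (n+1) (face g j.succ c) = 0 := by
      intro c
      apply ih
      intro b b' hb
      apply hg
      intro i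
      rcases eq_or_ne i j with rfl | hij
      · simp [ins]
      · obtain ⟨k, rfl⟩ := Fin.exists_succAbove_eq hij
        rw [← Fin.succ_succAbove_succ]
        simp only [ins, Fin.insertNth_apply_succAbove]
        exact hb k
    simp [Al, key]

lemma Al_neg_Wc_neg (s : ℕ → P → ZMod 2) (ν : P → P) (hν : ∀ i p, s i (ν p) = s i p + 1) :
    ∀ (n : ℕ) (g : (Fin n → Bool) → P), Wc s n (fun b => ν (g b)) = Wc s n g ∧
      Al s n (fun b => ν (g b)) = Al s n g + Wc s n g := by
  intro n
  have aux : ∀ g : (Fin n → Bool) → P, Wc s n (fun b => ν (g b)) = Wc s n g →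
      Al s n (fun b => ν (g b)) = Al s n g + Wc s n g := by
    intro g h
    simp only [Al, h, hν]; ring
  induction n with
  | zero => intro g; exact ⟨rfl, aux g rfl⟩
  | succ n ih =>
    intro g
    have h1 : Wc s (n+1) (fun b => ν (g b)) = Wc s (n+1) g := by
      have ih' : ∀ g : (Fin n → Bool) → P, Al s n (fun b => ν (g b)) = Al s n g + Wc s n g :=
        fun g => (ih (fun g h => by simp only [Al, h, hν]; ring) g).2
      have e : Wc s (n+1) (fun b => ν (g b)) = Wc s (n+1) g + cob (Wc s n) g := by
        rw [Wc_succ, Wc_succ]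
        unfold cob
        rw [← Finset.sum_add_distrib]
        refine Finset.sum_congr rfl fun j _ => ?_
        have e1 : ∀ c, face (fun b => ν (g b)) j c = fun b => ν (face g j c b) := fun c => rfl
        rw [e1, e1, ih', ih']; ring
      rw [e, cob_Wc, add_zero]
    exact ⟨h1, aux g h1⟩

/-- grid -/
def pt (M : ℕ) (e : Fin M × Bool) (b : Bool) : ℝ :=
  (if e.2 then 1 else -1) * (((e.1 : ℕ) + (if b then 1 else 0) : ℕ) / (M : ℝ))

def flipE {M : ℕ} (e : Fin M × Bool) : Fin M × Bool := (e.1, !e.2)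

lemma pt_flip {M : ℕ} (e : Fin M × Bool) (b : Bool) : pt M (flipE e) b = - pt M e b := by
  rcases e with ⟨e, c⟩
  cases c <;> simp [pt, flipE]

lemma pt_abs {M : ℕ} (e : Fin M × Bool) (b : Bool) : |pt M e b| ≤ 1 := by
  rcases e with ⟨e, c⟩
  have hM : (0:ℝ) < M := by exact_mod_cast (Nat.zero_le _).trans_lt e.2
  have h : |pt M (e, c) b| = (((e : ℕ) + (if b then 1 else 0) : ℕ) / (M : ℝ)) := by
    unfold pt
    rw [abs_mul, abs_of_nonneg (by positivity : (0:ℝ) ≤ (((e : ℕ) + (if b then 1 else 0) : ℕ) / (M : ℝ)))]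
    cases c <;> simp
  rw [h, div_le_one hM]
  have := e.2
  exact_mod_cast (by split_ifs <;> omega)

lemma pt_close {M : ℕ} (e : Fin M × Bool) (b b' : Bool) : |pt M e b - pt M e b'| ≤ 1 / M := by
  rcases e with ⟨e, c⟩
  have hM : (0:ℝ) < M := by exact_mod_cast (Nat.zero_le _).trans_lt e.2
  have : (0:ℝ) ≤ 1 / M := by positivity
  have h2 : |(1:ℝ)/M| = 1/M := abs_of_nonneg this
  cases c <;> cases b <;> cases b' <;> simp [pt] <;> ring_nf <;> simp

lemma pt_tele (M : ℕ) (hM : 0 < M) (h : ℝ → ZMod 2) :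
    ∑ e : Fin M × Bool, (h (pt M e true) + h (pt M e false)) = h 1 + h (-1) := by
  have tel : ∀ (k : ℕ → ZMod 2) (n : ℕ), ∑ i ∈ Finset.range n, (k (i+1) + k i) = k n + k 0 := by
    intro k n
    induction n with
    | zero => simp [two_eq]
    | succ n ih =>
      rw [Finset.sum_range_succ, ih]
      generalize k _ = a
      generalize k _ = b
      generalize k _ = c
      revert a b c; decide
  have hM' : (M:ℝ) ≠ 0 := by positivity
  rw [Fintype.sum_prod_type_right]
  simp only [Fintype.sum_bool, pt]
  have t1 := tel (fun i => h (1 * ((i:ℕ)/(M:ℝ)))) M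
  have t2 := tel (fun i => h (-1 * ((i:ℕ)/(M:ℝ)))) M
  rw [← Fin.sum_univ_eq_sum_range (fun i => (h (1 * ((i+1:ℕ)/(M:ℝ))) + h (1 * ((i:ℕ)/(M:ℝ)))))] at t1
  rw [← Fin.sum_univ_eq_sum_range (fun i => (h (-1 * ((i+1:ℕ)/(M:ℝ))) + h (-1 * ((i:ℕ)/(M:ℝ)))))] at t2
  simp only [if_true, Bool.false_eq_true, if_false, add_zero]
  rw [t1, t2, div_self hM']
  simp only [Nat.cast_zero, zero_div, mul_zero, mul_one]
  generalize h _ = a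
  generalize h _ = b
  generalize h _ = c
  revert a b c; decide

def cell {M n : ℕ} (F : (Fin n → ℝ) → P) (e : Fin n → Fin M × Bool) : (Fin n → Bool) → P :=
  fun b => F (fun i => pt M (e i) (b i))

def integ (M : ℕ) {n : ℕ} (β : ((Fin n → Bool) → P) → ZMod 2) (F : (Fin n → ℝ) → P) : ZMod 2 :=
  ∑ e : Fin n → Fin M × Bool, β (cell F e)

lemma stokes {M n : ℕ} (hM : 0 < M) (β : ((Fin n → Bool) → P) → ZMod 2)
    (F : (Fin (n+1) → ℝ) → P) :
    integ M (cob β) F = ∑ j, (integ M β (fun y => F (ins j 1 y)) +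
      integ M β (fun y => F (ins j (-1) y))) := by
  unfold integ cob
  rw [Finset.sum_comm]
  refine Finset.sum_congr rfl fun j _ => ?_
  rw [← (Fin.insertNthEquiv (fun _ => Fin M × Bool) j).sum_comp, Fintype.sum_prod_type,
    Finset.sum_comm, ← Finset.sum_add_distrib]
  refine Finset.sum_congr rfl fun e _ => ?_
  rw [← pt_tele M hM (fun x => β (cell (fun y => F (ins j x y)) e))]
  refine Finset.sum_congr rfl fun e0 _ => ?_
  have key : ∀ c, face (cell F ((Fin.insertNthEquiv (fun _ => Fin M × Bool) j) (e0, e))) j c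
      = cell (fun y => F (ins j (pt M e0 c) y)) e := by
    intro c
    funext b
    simp only [face, cell]
    congr 1
    symm
    unfold ins
    rw [Fin.insertNth_eq_iff]
    constructor
    · simp [Fin.insertNthEquiv]
    · funext k; simp [Fin.insertNthEquiv, Fin.removeNth]
  rw [key, key]

lemma integ_congr {M n : ℕ} (β : ((Fin n → Bool) → P) → ZMod 2) (F F' : (Fin n → ℝ) → P)
    (h : ∀ y, (∀ i, |y i| ≤ 1) → F y = F' y) : integ M β F = integ M β F' := by
  unfold integ
  refine Finset.sum_congr rfl fun e _ => ?_
  congr 1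
  funext b
  exact h _ (fun i => pt_abs _ _)

lemma integ_flip {M n : ℕ} (β : ((Fin n → Bool) → P) → ZMod 2) (F : (Fin n → ℝ) → P) :
    integ M β (fun y => F (-y)) = integ M β F := by
  unfold integ
  have hinv : Function.Involutive (fun (e : Fin n → Fin M × Bool) i => flipE (e i)) := by
    intro e; funext i; simp [flipE]
  refine Fintype.sum_bijective _ hinv.bijective _ _ fun e => ?_
  congr 1
  funext b
  simp only [cell]
  congr 1
  funext i
  simp [pt_flip]

/-- The hemispherical structure. -/
def Good (ν : P → P) : (m : ℕ) → ((Fin m → ℝ) → P) → Prop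
  | 0, _ => True
  | m+1, f => Good ν m (fun y => f (ins 0 1 y)) ∧
      (∀ y : Fin m → ℝ, (∀ i, |y i| ≤ 1) → f (ins 0 (-1) y) = ν (f (ins 0 1 (-y)))) ∧
      (∀ (t : ℝ) (y : Fin m → ℝ), |t| ≤ 1 → (∀ i, |y i| ≤ 1) → (∃ i, |y i| = 1) →
        f (ins 0 t y) = f (ins 0 1 y))

lemma integ_ν {M n : ℕ} (s : ℕ → P → ZMod 2) (ν : P → P) (hν : ∀ i p, s i (ν p) = s i p + 1)
    (F : (Fin n → ℝ) → P) :
    integ M (Al s n) F + integ M (Al s n) (fun y => ν (F y)) = integ M (Wc s n) F := by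
  unfold integ
  rw [← Finset.sum_add_distrib]
  refine Finset.sum_congr rfl fun e _ => ?_
  have := (Al_neg_Wc_neg s ν hν n (cell F e)).2
  have e1 : cell (fun y => ν (F y)) e = fun b => ν (cell F e b) := rfl
  rw [e1, this, ← add_assoc, two_eq, zero_add]

lemma ins_cube {n : ℕ} (j : Fin (n+1)) (a : ℝ) (y : Fin n → ℝ) (ha : |a| ≤ 1)
    (hy : ∀ i, |y i| ≤ 1) : ∀ i, |ins j a y i| ≤ 1 := by
  intro i
  rcases eq_or_ne i j with rfl | hij
  · simpa [ins] using ha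
  · obtain ⟨k, rfl⟩ := Fin.exists_succAbove_eq hij
    simpa [ins] using hy k

lemma ins_cons_eta {n : ℕ} (x : Fin (n+1) → ℝ) : ins 0 (x 0) (fun i => x i.succ) = x := by
  unfold ins
  rw [Fin.insertNth_eq_iff]
  exact ⟨rfl, by funext i; simp [Fin.removeNth]⟩

lemma fan {M : ℕ} (hM : 0 < M) (s : ℕ → P → ZMod 2) (ν : P → P)
    (hν : ∀ i p, s i (ν p) = s i p + 1) : ∀ (m : ℕ) (f : (Fin m → ℝ) → P), Good ν m f →
    integ M (Wc s m) f = 1 := by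
  intro m
  induction m with
  | zero => intro f _; simp [integ, Wc]
  | succ m ih =>
    rintro f ⟨h1, h2, h3⟩
    have hW : Wc s (m+1) = cob (Al s m) := rfl
    rw [hW, stokes hM, Fin.sum_univ_succ]
    have e1 : integ M (Al s m) (fun y => f (ins 0 (-1) y)) =
        integ M (Al s m) (fun y => ν (f (ins 0 1 y))) := by
      rw [← integ_flip (Al s m) (fun y => ν (f (ins 0 1 y)))]
      exact integ_congr _ _ _ h2
    rw [e1, integ_ν s ν hν (fun y => f (ins 0 1 y)), ih _ h1]
    have e2 : ∀ (j : Fin m) (a : ℝ), |a| = 1 →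
        integ M (Al s m) (fun y => f (ins j.succ a y)) = 0 := by
      intro j a ha
      obtain ⟨m, rfl⟩ : ∃ k, m = k + 1 := ⟨m - 1, by have := j.2; omega⟩
      refine Finset.sum_eq_zero fun e _ => ?_
      have : Wc s (m+1) (cell (fun y => f (ins j.succ a y)) e) = 0 := by
        apply Wc_deg
        intro b c hbc
        have hx : ∀ b : Fin (m+1) → Bool, f (ins j.succ a fun i => pt M (e i) (b i)) =
            f (ins 0 1 (ins j a fun i => pt M (e i.succ) (b i.succ))) := by
          intro b
          have q : ins j.succ a (fun i => pt M (e i) (b i)) =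
              ins 0 (pt M (e 0) (b 0)) (ins j a fun i => pt M (e i.succ) (b i.succ)) := by
            unfold ins
            rw [Fin.insertNth_eq_iff]
            constructor
            · rw [Fin.insertNth_zero', Fin.cons_succ]; simp
            · funext k
              refine Fin.cases ?_ (fun k => ?_) k
              · simp [Fin.removeNth]
              · rw [Fin.removeNth, Fin.succ_succAbove_succ, Fin.insertNth_zero', Fin.cons_succ]; simp
          rw [q]
          refine h3 _ _ (pt_abs _ _) (ins_cube _ _ _ ha.le fun i => pt_abs _ _) ⟨j, ?_⟩
          simpa [ins] using ha
        show f _ = f _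
        rw [hx, hx]
        simp only [hbc]
      simp [Al, this]
    rw [Finset.sum_eq_zero, add_zero]
    intro j _
    rw [e2 j 1 (by simp), e2 j (-1) (by simp), add_zero]

lemma final_comb {M : ℕ} (hM : 0 < M) (s : ℕ → P → ZMod 2) (ν : P → P)
    (hν : ∀ i p, s i (ν p) = s i p + 1) (d : ℕ) (U : (Fin (d+1) → ℝ) → P)
    (hg : Good ν d (fun y => U (ins 0 1 y)))
    (h1 : ∀ y : Fin d → ℝ, (∀ i, |y i| ≤ 1) → U (ins 0 (-1) y) = ν (U (ins 0 1 y)))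
    (h2 : ∀ y : Fin (d+1) → ℝ, (∀ i, |y i| ≤ 1) → (∃ i : Fin d, |y i.succ| = 1) → U (-y) = U y) :
    ∃ e : Fin (d+1) → Fin M × Bool, ∀ i < d + 1, ∃ b b',
      s i (cell U e b) ≠ s i (cell U e b') := by
  have key : integ M (Wc s (d+1)) U = 1 := by
    have hW : Wc s (d+1) = cob (Al s d) := rfl
    rw [hW, stokes hM, Fin.sum_univ_succ, integ_congr (Al s d) _ _ h1,
      integ_ν s ν hν (fun y => U (ins 0 1 y)), fan hM s ν hν d _ hg, Finset.sum_eq_zero, add_zero]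
    intro j _
    have : integ M (Al s d) (fun y => U (ins j.succ (-1) y)) =
        integ M (Al s d) (fun y => U (ins j.succ 1 y)) := by
      rw [← integ_flip]
      refine integ_congr _ _ _ fun y hy => ?_
      rw [← h2 (ins j.succ 1 y) (ins_cube _ _ _ (by simp) hy) ⟨j, by simp [ins]⟩]
      congr 1
      unfold ins
      rw [Fin.insertNth_eq_iff]
      constructor
      · simp
      · funext k; simp [Fin.removeNth]
    rw [this, two_eq]
  have hne : integ M (Wc s (d+1)) U ≠ 0 := by rw [key]; exact one_ne_zero
  obtain ⟨e, _, he⟩ := Finset.exists_ne_zero_of_sum_ne_zero hne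
  exact ⟨e, Wc_support s (d+1) _ he⟩

end Comb

section Topo
open Metric Set

lemma hep {X E : Type*} [TopologicalSpace X] [NormedAddCommGroup E] [NormedSpace ℝ E]
    (K : ℝ × E → X) (hK : ContinuousOn K (Set.Icc 0 1 ×ˢ sphere 0 1)) (φ₁ : E → X)
    (h₁ : ContinuousOn φ₁ (closedBall 0 1)) (h : ∀ z ∈ sphere (0:E) 1, φ₁ z = K (1, z)) :
    ∃ φ : E → X, ContinuousOn φ (closedBall 0 1) ∧ ∀ z ∈ sphere (0:E) 1, φ z = K (0, z) := by
  classical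
  refine ⟨fun z => if ‖z‖ ≤ 1/2 then φ₁ ((2:ℝ) • z) else K (2 - 2 * ‖z‖, ‖z‖⁻¹ • z), ?_, ?_⟩
  · have hcov : closedBall (0:E) 1 = {z | ‖z‖ ≤ 1/2} ∪ {z | 1/2 ≤ ‖z‖ ∧ ‖z‖ ≤ 1} := by
      ext z
      simp only [mem_closedBall, dist_zero_right, Set.mem_union, Set.mem_ofPred_eq]
      constructor
      · intro hz
        rcases le_total ‖z‖ (1/2) with h | h
        · exact Or.inl h
        · exact Or.inr ⟨h, hz⟩
      · rintro (h | h)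
        · linarith
        · exact h.2
    rw [hcov]
    refine ContinuousOn.union_of_isClosed ?_ ?_ (isClosed_le continuous_norm continuous_const)
      ((isClosed_le continuous_const continuous_norm).inter
        (isClosed_le continuous_norm continuous_const))
    · refine ContinuousOn.congr (f := fun z => φ₁ ((2:ℝ) • z)) ?_ ?_
      · refine h₁.comp (by fun_prop) ?_
        intro z hz
        simp only [Set.mem_ofPred_eq] at hz
        simp only [mem_closedBall, dist_zero_right, norm_smul, Real.norm_ofNat]
        linarith
      · intro z hz
        exact if_pos hz
    · refine ContinuousOn.congr (f := fun z => K (2 - 2 * ‖z‖, ‖z‖⁻¹ • z)) ?_ ?_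
      · refine hK.comp ?_ ?_
        · refine ContinuousOn.prodMk (by fun_prop) ?_
          refine ContinuousOn.smul (ContinuousOn.inv₀ (by fun_prop) ?_) continuousOn_id
          rintro z ⟨hz, _⟩
          linarith
        · rintro z ⟨hz, hz'⟩
          have : ‖z‖ ≠ 0 := by linarith
          refine ⟨⟨by simp only; linarith, by simp only; linarith⟩, ?_⟩
          simp [norm_smul, this]
      · rintro z ⟨hz, hz'⟩
        simp only
        split_ifs with hh
        · have e : ‖z‖ = 1/2 := le_antisymm hh hz
          rw [h]
          · congr 2
            · rw [e]; norm_num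
            · rw [e]; norm_num
          · simp [norm_smul, e]
        · rfl
  · intro z hz
    have e : ‖z‖ = 1 := by simpa using hz
    simp only [e]
    norm_num

lemma ext_J {X : Type*} [TopologicalSpace X] (m : ℕ)
    (hm : ∀ x : X, Subsingleton (HomotopyGroup (Fin m) X x)) (ψ : ℝ × (Fin m → ℝ) → X) (x₀ : X)
    (hψ : ContinuousOn ψ (sphere 0 1))
    (hJ : ∀ z ∈ sphere (0 : ℝ × (Fin m → ℝ)) 1, z.1 = -1 ∨ ‖z.2‖ = 1 → ψ z = x₀) :
    ∃ φ : ℝ × (Fin m → ℝ) → X, ContinuousOn φ (closedBall 0 1) ∧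
      ∀ z ∈ sphere (0 : ℝ × (Fin m → ℝ)) 1, φ z = ψ z := by
  have hcube : ∀ u : Fin m → unitInterval, ‖fun i => 2 * (u i : ℝ) - 1‖ ≤ 1 := by
    intro u
    rw [pi_norm_le_iff_of_nonneg zero_le_one]
    intro i
    rw [Real.norm_eq_abs, abs_le]
    have := (u i).2
    constructor <;> linarith [this.1, this.2]
  have hsph : ∀ y : Fin m → ℝ, ‖y‖ ≤ 1 → ((1:ℝ), y) ∈ sphere (0 : ℝ × (Fin m → ℝ)) 1 := by
    intro y hy
    simp [Prod.norm_def, hy]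
  let γc : C(Fin m → unitInterval, X) := ⟨fun u => ψ (1, fun i => 2 * (u i : ℝ) - 1), by
    refine hψ.comp_continuous (by fun_prop) fun u => hsph _ (hcube u)⟩
  let γ : GenLoop (Fin m) X x₀ := ⟨γc, by
    rintro u ⟨i, hi⟩
    refine hJ _ (hsph _ (hcube u)) (Or.inr (le_antisymm (hcube u) ?_))
    refine le_trans ?_ (norm_le_pi_norm _ i)
    rcases hi with hi | hi <;> simp [hi]
    norm_num⟩
  have hh : GenLoop.Homotopic γ GenLoop.const :=
    Quotient.exact (s := GenLoop.Homotopic.setoid (Fin m) x₀)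
      (@Subsingleton.elim _ (hm x₀) (Quotient.mk _ γ) (Quotient.mk _ GenLoop.const))
  obtain ⟨F⟩ := hh
  let pr : ℝ → unitInterval := Set.projIcc 0 1 zero_le_one
  have hpr : Continuous pr := continuous_projIcc
  have hF : Continuous F := F.continuous
  refine ⟨fun z => F (pr ((1 - z.1)/2), fun i => pr ((1 + z.2 i)/2)), ?_, ?_⟩
  · apply Continuous.continuousOn
    refine hF.comp (Continuous.prodMk (hpr.comp (by fun_prop)) ?_)
    exact continuous_pi fun i => hpr.comp (by fun_prop)
  · rintro ⟨t, y⟩ hz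
    have hz' : max |t| ‖y‖ = 1 := by simpa [Prod.norm_def] using hz
    have hy : ‖y‖ ≤ 1 := hz' ▸ le_max_right _ _
    have hy' : ∀ i, -1 ≤ y i ∧ y i ≤ 1 := fun i => abs_le.1 ((norm_le_pi_norm y i).trans hy)
    have ht : |t| ≤ 1 := hz' ▸ le_max_left _ _
    have hbd : ∀ τ, ‖y‖ = 1 → F (τ, fun i => pr ((1 + y i)/2)) = x₀ := by
      intro τ h1
      have hb : (fun i => pr ((1 + y i)/2)) ∈ Cube.boundary (Fin m) := by
        have : ∃ i, |y i| = 1 := by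
          by_contra hcon
          push Not at hcon
          have : ‖y‖ < 1 := by
            rw [pi_norm_lt_iff zero_lt_one]
            intro i
            exact lt_of_le_of_ne (abs_le.2 (hy' i)) (hcon i)
          linarith
        obtain ⟨i, hi⟩ := this
        refine ⟨i, ?_⟩
        rcases (abs_eq zero_le_one).1 hi with h | h
        · right; simp only [h, pr]; norm_num
        · left; simp only [h, pr]; norm_num
      rw [F.eq_fst τ hb]
      exact γ.2 _ hb
    by_cases h1 : ‖y‖ = 1
    · rw [hJ _ hz (Or.inr h1)]
      exact hbd _ h1
    · have ht1 : |t| = 1 := by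
        rcases max_choice |t| ‖y‖ with h | h
        · rw [← h, hz']
        · exact absurd (h ▸ hz') h1
      rcases (abs_eq zero_le_one).1 ht1 with rfl | rfl
      · have e0 : pr ((1 - 1)/2) = 0 := by simp [pr]
        simp only [e0]
        rw [F.apply_zero]
        show ψ _ = ψ _
        congr 2
        funext i
        have : (1 + y i)/2 ∈ Set.Icc (0:ℝ) 1 := by
          have := hy' i
          constructor <;> linarith [this.1, this.2]
        simp only [pr, projIcc_of_mem zero_le_one this]
        ring
      · have e1 : pr ((1 - (-1))/2) = 1 := by simp only [pr]; norm_num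
        simp only [e1]
        rw [F.apply_one, hJ _ hz (Or.inl rfl)]
        rfl

lemma ext_sphere {X : Type*} [TopologicalSpace X] (m : ℕ)
    (h0 : m = 0 → PathConnectedSpace X)
    (hm : 1 ≤ m → ∀ x : X, Subsingleton (HomotopyGroup (Fin m) X x)) (ψ : ℝ × (Fin m → ℝ) → X)
    (hψ : ContinuousOn ψ (sphere 0 1)) :
    ∃ φ : ℝ × (Fin m → ℝ) → X, ContinuousOn φ (closedBall 0 1) ∧
      ∀ z ∈ sphere (0 : ℝ × (Fin m → ℝ)) 1, φ z = ψ z := by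
  rcases Nat.eq_zero_or_pos m with rfl | hpos
  · have := h0 rfl
    let p : Path (ψ (-1, 0)) (ψ (1, 0)) := PathConnectedSpace.somePath _ _
    refine ⟨fun z => p (Set.projIcc 0 1 zero_le_one ((1 + z.1)/2)), ?_, ?_⟩
    · apply Continuous.continuousOn
      exact p.continuous.comp (continuous_projIcc.comp (by fun_prop))
    · rintro ⟨t, y⟩ hz
      have hy : y = 0 := Subsingleton.elim _ _
      subst hy
      have : |t| = 1 := by
        have h2 : ‖((t, 0) : ℝ × (Fin 0 → ℝ))‖ = 1 := by simpa using hz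
        rw [Prod.norm_def, norm_zero, Real.norm_eq_abs] at h2
        simpa using h2
      rcases (abs_eq zero_le_one).1 this with rfl | rfl
      · simp
      · simp
  · let k : ℝ × (Fin m → ℝ) → ℝ × (Fin m → ℝ) := fun z =>
      (z.1 - 2 * ‖z.2‖, (max 0 (min (1 - ‖z.2‖) z.1)) • z.2)
    let h : ℝ × (ℝ × (Fin m → ℝ)) → ℝ × (Fin m → ℝ) := fun q => (1 - q.1) • q.2 + q.1 • k q.2
    have hcont : Continuous h := by
      simp only [h, k]; fun_prop
    have hnz : ∀ q ∈ Set.Icc (0:ℝ) 1 ×ˢ sphere (0 : ℝ × (Fin m → ℝ)) 1, h q ≠ 0 := by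
      rintro ⟨s, t, y⟩ ⟨⟨hs0, hs1⟩, hz⟩ h00
      simp only at hs0 hs1
      have hz' : max |t| ‖y‖ = 1 := by simpa [Prod.norm_def] using hz
      have hy : ‖y‖ ≤ 1 := hz' ▸ le_max_right _ _
      have ht : |t| ≤ 1 := hz' ▸ le_max_left _ _
      have a1 := congrArg Prod.fst h00
      have a2 := congrArg Prod.snd h00
      simp only [h, k, Prod.fst_add, Prod.smul_fst, Prod.snd_add, Prod.smul_snd, smul_eq_mul,
        Prod.fst_zero, Prod.snd_zero] at a1 a2
      rw [smul_smul, ← add_smul, smul_eq_zero] at a2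
      set β := max 0 (min (1 - ‖y‖) t) with hβ
      have hβ0 : 0 ≤ β := le_max_left _ _
      have a1' : t = 2 * s * ‖y‖ := by linarith
      rcases a2 with a2 | a2
      · have hs : s = 1 := by
          nlinarith [mul_nonneg hs0 hβ0]
        subst hs
        have hb : β = 0 := by linarith
        have : min (1 - ‖y‖) t ≤ 0 := by rw [← hb]; exact le_max_right _ _
        rcases min_le_iff.1 this with h' | h'
        · have : ‖y‖ = 1 := by linarith
          rw [this] at a1'
          rw [a1'] at ht
          norm_num at ht
        · have h5 : ‖y‖ = 0 := by nlinarith [norm_nonneg y]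
          rw [h5] at a1' hz'
          rw [a1'] at hz'
          norm_num at hz'
      · subst a2
        simp at a1'
        subst a1'
        simp at hz'
    let N : ℝ × (Fin m → ℝ) → ℝ × (Fin m → ℝ) := fun v => ‖v‖⁻¹ • v
    have hNs : ∀ v, v ≠ 0 → N v ∈ sphere (0 : ℝ × (Fin m → ℝ)) 1 := by
      intro v hv
      simp [N, norm_smul, hv]
    have hNc : ContinuousOn N {v | v ≠ 0} := by
      refine ContinuousOn.smul (ContinuousOn.inv₀ continuous_norm.continuousOn ?_) continuousOn_id
      intro v hv
      exact norm_ne_zero_iff.2 hv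
    let K : ℝ × (ℝ × (Fin m → ℝ)) → X := fun q => ψ (N (h q))
    have hK : ContinuousOn K (Set.Icc 0 1 ×ˢ sphere 0 1) :=
      hψ.comp (hNc.comp hcont.continuousOn hnz) (fun q hq => hNs _ (hnz q hq))
    have hK0 : ∀ z ∈ sphere (0 : ℝ × (Fin m → ℝ)) 1, K (0, z) = ψ z := by
      intro z hz
      have e : ‖z‖ = 1 := by simpa using hz
      simp [K, h, N, e]
    have hK1c : ContinuousOn (fun z => K (1, z)) (sphere 0 1) := by
      refine hK.comp (by fun_prop) fun z hz => ⟨by simp, hz⟩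
    obtain ⟨φ₁, c₁, e₁⟩ := ext_J m (hm hpos) (fun z => K (1, z)) (ψ (-1, 0)) hK1c (by
      rintro ⟨t, y⟩ hz hor
      have hz' : max |t| ‖y‖ = 1 := by simpa [Prod.norm_def] using hz
      have hy : ‖y‖ ≤ 1 := hz' ▸ le_max_right _ _
      have ht : |t| ≤ 1 := hz' ▸ le_max_left _ _
      have hβ : max 0 (min (1 - ‖y‖) t) = 0 := by
        apply max_eq_left
        rcases hor with hh | hh
        · simp only at hh
          exact (min_le_right _ _).trans (by linarith)
        · simp only at hh
          exact (min_le_left _ _).trans (by linarith)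
      have hneg : t - 2 * ‖y‖ < 0 := by
        rcases hor with hh | hh
        · simp only at hh
          linarith [norm_nonneg y]
        · simp only at hh
          linarith [(abs_le.1 ht).2]
      simp only [K, h, k, hβ]
      congr 1
      simp only [N, sub_self, zero_smul, zero_add, one_smul]
      have hn : ‖((t - 2 * ‖y‖, (0 : Fin m → ℝ)) : ℝ × (Fin m → ℝ))‖ = -(t - 2 * ‖y‖) := by
        rw [Prod.norm_def]
        simp only [norm_zero, Real.norm_eq_abs]
        rw [abs_of_neg hneg]; exact max_eq_left (by linarith)
      rw [hn]
      ext
      · simp only [Prod.smul_fst, smul_eq_mul]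
        rw [inv_neg, neg_mul, inv_mul_cancel₀ hneg.ne]
      · simp)
    obtain ⟨φ, c, e⟩ := hep K hK φ₁ c₁ e₁
    exact ⟨φ, c, fun z hz => (e z hz).trans (hK0 z hz)⟩

end Topo

section Build
open Metric

lemma cube_iff {m : ℕ} (y : Fin m → ℝ) : ‖y‖ ≤ 1 ↔ ∀ i, |y i| ≤ 1 := by
  rw [pi_norm_le_iff_of_nonneg zero_le_one]
  rfl

lemma bd_iff {m : ℕ} (y : Fin m → ℝ) (hy : ∀ i, |y i| ≤ 1) : ‖y‖ = 1 ↔ ∃ i, |y i| = 1 := by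
  constructor
  · intro h1
    by_contra hcon
    push Not at hcon
    have : ‖y‖ < 1 := by
      rw [pi_norm_lt_iff zero_lt_one]
      intro i
      exact lt_of_le_of_ne (hy i) (hcon i)
    linarith
  · rintro ⟨i, hi⟩
    refine le_antisymm ((cube_iff y).2 hy) ?_
    rw [← hi]
    exact norm_le_pi_norm y i

lemma Good_congr {P : Type*} (ν : P → P) : ∀ (m : ℕ) (f f' : (Fin m → ℝ) → P),
    (∀ y, (∀ i, |y i| ≤ 1) → f y = f' y) → Good ν m f → Good ν m f'
  | 0, _, _, _, _ => trivial
  | m+1, f, f', h, ⟨h1, h2, h3⟩ => by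
    have hn : ∀ y : Fin m → ℝ, (∀ i, |y i| ≤ 1) → ∀ i, |(-y) i| ≤ 1 := by
      intro y hy i; simpa using hy i
    refine ⟨Good_congr ν m _ _ (fun y hy => h _ (ins_cube _ _ _ (by simp) hy)) h1, ?_, ?_⟩
    · intro y hy
      rw [← h _ (ins_cube _ _ _ (by simp) hy), ← h _ (ins_cube _ _ _ (by simp) (hn y hy)), h2 y hy]
    · intro t y ht hy hb
      rw [← h _ (ins_cube _ _ _ ht hy), ← h _ (ins_cube _ _ _ (by simp) hy), h3 t y ht hy hb]

lemma Good_map {P Q : Type*} (ρ : P → P) (ν : Q → Q) (q : P → Q) (hq : ∀ p, q (ρ p) = ν (q p)) :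
    ∀ (m : ℕ) (f : (Fin m → ℝ) → P), Good ρ m f → Good ν m (fun y => q (f y))
  | 0, _, _ => trivial
  | m+1, f, ⟨h1, h2, h3⟩ => by
    refine ⟨Good_map ρ ν q hq m _ h1, ?_, ?_⟩
    · intro y hy
      simp only [h2 y hy, hq]
    · intro t y ht hy hb
      simp only [h3 t y ht hy hb]

lemma Good_equiv {P : Type*} (ρ : P → P) (hρ : ∀ x, ρ (ρ x) = x) : ∀ (m : ℕ) (f : (Fin m → ℝ) → P),
    Good ρ m f → ∀ y, (∀ i, |y i| ≤ 1) → (∃ i, |y i| = 1) → f (-y) = ρ (f y)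
  | 0, _, _ => fun y _ ⟨i, _⟩ => i.elim0
  | m+1, f, ⟨h1, h2, h3⟩ => by
    intro x hx hb
    obtain ⟨t, y, rfl⟩ : ∃ t y, x = ins 0 t y := ⟨_, _, (ins_cons_eta x).symm⟩
    have hneg : - ins 0 t y = ins 0 (-t) (-y) := by
      funext i
      refine Fin.cases ?_ (fun i => ?_) i
      · simp [ins]
      · rw [Pi.neg_apply, ins_zero_succ, ins_zero_succ, Pi.neg_apply]
    have ht : |t| ≤ 1 := by simpa [ins] using hx 0
    have hy : ∀ i, |y i| ≤ 1 := fun i => by simpa [ins_zero_succ] using hx i.succ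
    have hy' : ∀ i, |(-y) i| ≤ 1 := fun i => by simpa using hy i
    rw [hneg]
    by_cases hby : ∃ i, |y i| = 1
    · have hby' : ∃ i, |(-y) i| = 1 := by simpa using hby
      rw [h3 t y ht hy hby, h3 (-t) (-y) (by simpa using ht) hy' hby']
      exact Good_equiv ρ hρ m _ h1 y hy hby
    · have ht1 : |t| = 1 := by
        obtain ⟨i, hi⟩ := hb
        induction i using Fin.cases with
        | zero => simpa [ins] using hi
        | succ i => exact absurd ⟨i, by simpa [ins_zero_succ] using hi⟩ hby
      rcases (abs_eq zero_le_one).1 ht1 with rfl | rfl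
      · rw [h2 _ hy', neg_neg]
      · rw [h2 _ hy, hρ, neg_neg]

lemma exists_good {X : Type*} [TopologicalSpace X] (ρ : X → X) (hρc : Continuous ρ)
    (hρ : ∀ x, ρ (ρ x) = x) (hne : Nonempty X) : ∀ (d : ℕ)
    (_ : 1 ≤ d → PathConnectedSpace X)
    (_ : ∀ i, 1 ≤ i → i < d → ∀ x : X, Subsingleton (HomotopyGroup (Fin i) X x)),
    ∃ φ : (Fin d → ℝ) → X, ContinuousOn φ (closedBall 0 1) ∧ Good ρ d φ := by
  intro d
  induction d with
  | zero =>
    intro _ _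
    obtain ⟨x⟩ := hne
    exact ⟨fun _ => x, continuousOn_const, trivial⟩
  | succ m ih =>
    intro h0 hm
    obtain ⟨φ, hc, hg⟩ := ih (fun _ => h0 (by omega)) (fun i hi hi' => hm i hi (by omega))
    have heq := Good_equiv ρ hρ m φ hg
    classical
    let ψ : ℝ × (Fin m → ℝ) → X := fun z => if z.1 = -1 then ρ (φ (-z.2)) else φ z.2
    have hB : ∀ z : ℝ × (Fin m → ℝ), ‖z.2‖ ≤ 1 → (z.1 = 1 ∨ ‖z.2‖ = 1) → ψ z = φ z.2 := by
      rintro ⟨t, y⟩ hy h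
      simp only at hy h
      simp only [ψ]
      split_ifs with ht
      · have hy1 : ‖y‖ = 1 := by
          rcases h with h | h
          · rw [h] at ht; norm_num at ht
          · exact h
        have hyc := (cube_iff y).1 hy
        rw [heq y hyc ((bd_iff y hyc).1 hy1), hρ]
      · rfl
    have hψ : ContinuousOn ψ (sphere 0 1) := by
      have hsub : sphere (0 : ℝ × (Fin m → ℝ)) 1 ⊆
          {z | z.1 = -1 ∧ ‖z.2‖ ≤ 1} ∪ {z | ‖z.2‖ ≤ 1 ∧ (z.1 = 1 ∨ ‖z.2‖ = 1)} := by
        rintro ⟨t, y⟩ hz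
        have hz' : max |t| ‖y‖ = 1 := by simpa [Prod.norm_def] using hz
        have hy : ‖y‖ ≤ 1 := hz' ▸ le_max_right _ _
        by_cases h1 : ‖y‖ = 1
        · exact Or.inr ⟨hy, Or.inr h1⟩
        · have ht1 : |t| = 1 := by
            rcases max_choice |t| ‖y‖ with h | h
            · rw [← h, hz']
            · exact absurd (h ▸ hz') h1
          rcases (abs_eq zero_le_one).1 ht1 with rfl | rfl
          · exact Or.inr ⟨hy, Or.inl rfl⟩
          · exact Or.inl ⟨rfl, hy⟩
      refine ContinuousOn.mono ?_ hsub
      refine ContinuousOn.union_of_isClosed ?_ ?_ ?_ ?_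
      · refine ContinuousOn.congr (f := fun z => ρ (φ (-z.2))) ?_ ?_
        · refine hρc.comp_continuousOn (hc.comp (by fun_prop) ?_)
          rintro z ⟨_, hz⟩
          simpa using hz
        · rintro z ⟨hz, _⟩
          exact if_pos hz
      · refine ContinuousOn.congr (f := fun z => φ z.2) ?_ ?_
        · refine hc.comp (by fun_prop) ?_
          rintro z ⟨hz, _⟩
          simpa using hz
        · rintro z ⟨hz, hz'⟩
          exact hB z hz hz'
      · exact (isClosed_eq continuous_fst continuous_const).inter
          (isClosed_le continuous_snd.norm continuous_const)
      · exact (isClosed_le continuous_snd.norm continuous_const).inter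
          ((isClosed_eq continuous_fst continuous_const).union
          (isClosed_eq continuous_snd.norm continuous_const))
    obtain ⟨Φ, hΦc, hΦ⟩ := ext_sphere m (fun _ => h0 (by omega)) (fun h => hm m h (by omega)) ψ hψ
    have hins : ∀ t (y : Fin m → ℝ), (fun x : Fin (m+1) → ℝ => Φ (x 0, fun i => x i.succ))
        (ins 0 t y) = Φ (t, y) := by
      intro t y
      simp only [ins_zero_succ]
      simp [ins]
    have hsph : ∀ (t : ℝ) (y : Fin m → ℝ), |t| = 1 → (∀ i, |y i| ≤ 1) →
        (t, y) ∈ sphere (0 : ℝ × (Fin m → ℝ)) 1 := by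
      intro t y ht hy
      have := (cube_iff y).2 hy
      simp [Prod.norm_def, ht, this]
    have h1 : ∀ y : Fin m → ℝ, (∀ i, |y i| ≤ 1) → Φ (1, y) = φ y := by
      intro y hy
      rw [hΦ _ (hsph 1 y (by simp) hy)]
      exact hB _ ((cube_iff y).2 hy) (Or.inl rfl)
    refine ⟨fun x => Φ (x 0, fun i => x i.succ), ?_, ?_, ?_, ?_⟩
    · refine hΦc.comp (by fun_prop) ?_
      intro x hx
      have hx' : ∀ i, |x i| ≤ 1 := (cube_iff x).1 (by simpa using hx)
      have : ‖fun i : Fin m => x i.succ‖ ≤ 1 := (cube_iff _).2 fun i => hx' _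
      have h0' := hx' 0
      simp [Prod.norm_def, this, h0']
    · refine Good_congr ρ m φ _ ?_ hg
      intro y hy
      rw [hins, h1 y hy]
    · intro y hy
      rw [hins, hins, h1 _ (by simpa using hy), hΦ _ (hsph (-1) y (by simp) hy)]
      exact if_pos rfl
    · intro t y ht hy hb
      rw [hins, hins, h1 y hy]
      have hn := (bd_iff y hy).2 hb
      have : (t, y) ∈ sphere (0 : ℝ × (Fin m → ℝ)) 1 := by simp [Prod.norm_def, hn, ht]
      rw [hΦ _ this]
      exact hB _ hn.le (Or.inr hn)

end Build

section Analysis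
open Metric

abbrev NZ (d : ℕ) : Type := {v : Fin (d+1) → ℝ // v ≠ 0}

def nzNeg {d : ℕ} (p : NZ d) : NZ d := ⟨-p.1, neg_ne_zero.2 p.2⟩

open Classical in
def toNZ {d : ℕ} (v : Fin (d+1) → ℝ) : NZ d :=
  if h : v ≠ 0 then ⟨v, h⟩ else ⟨fun _ => 1, fun h => one_ne_zero (congrFun h 0)⟩

lemma toNZ_val {d : ℕ} (v : Fin (d+1) → ℝ) (h : v ≠ 0) : (toNZ v).1 = v := by
  unfold toNZ
  rw [dif_pos h]

lemma toNZ_neg {d : ℕ} (v : Fin (d+1) → ℝ) (h : v ≠ 0) : toNZ (-v) = nzNeg (toNZ v) := by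
  apply Subtype.ext
  rw [toNZ_val _ (neg_ne_zero.2 h)]
  simp [nzNeg, toNZ_val v h]

def co {d : ℕ} (i : ℕ) (p : NZ d) : ℝ := if h : i < d + 1 then p.1 ⟨i, h⟩ else 0

open Classical in
def sg {d : ℕ} (i : ℕ) (p : NZ d) : ZMod 2 :=
  if 0 < co i p ∨ (co i p = 0 ∧ 0 < toLex p.1) then 1 else 0

lemma sg_neg {d : ℕ} (i : ℕ) (p : NZ d) : sg i (nzNeg p) = sg i p + 1 := by
  have hc : co i (nzNeg p) = - co i p := by
    unfold co nzNeg
    split_ifs <;> simp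
  have hl : (0 < toLex (nzNeg p).1) ↔ ¬ (0 < toLex p.1) := by
    have : toLex (nzNeg p).1 = - toLex p.1 := rfl
    rw [this, neg_pos]
    have hne : toLex p.1 ≠ 0 := fun h => p.2 (toLex.injective h)
    exact ⟨fun h h' => lt_asymm h h', fun h => (lt_or_gt_of_ne hne).resolve_right h⟩
  unfold sg
  rw [hc, hl]
  rcases lt_trichotomy (co i p) 0 with h | h | h
  · simp [h, h.not_gt, h.ne]
  · by_cases h' : 0 < toLex p.1
    · simp [h, h']; decide
    · simp [h, h']
  · simp [h, h.not_gt, h.ne']; decide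

lemma sg_ne {d : ℕ} (i : Fin (d+1)) (p q : NZ d) (h : sg i p ≠ sg i q) :
    |p.1 i| ≤ |p.1 i - q.1 i| := by
  have hp : co (i:ℕ) p = p.1 i := by unfold co; rw [dif_pos i.2]
  have hq : co (i:ℕ) q = q.1 i := by unfold co; rw [dif_pos i.2]
  unfold sg at h
  rw [hp, hq] at h
  rcases lt_trichotomy (p.1 i) 0 with h1 | h1 | h1
  · rcases lt_or_ge (q.1 i) 0 with h2 | h2
    · simp [h1.not_gt, h1.ne, h2.not_gt, h2.ne] at h
    · rw [abs_of_neg h1, abs_of_neg (by linarith)]; linarith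
  · rw [h1]; simp
  · rcases lt_or_ge 0 (q.1 i) with h2 | h2
    · simp [h1, h2] at h
    · rw [abs_of_pos h1, abs_of_nonneg (by linarith)]; linarith

lemma norm_est {A : Type*} {n : ℕ} (F : A → Fin n → ℝ) (ε : ℝ) (hε : 0 < ε)
    (hclose : ∀ b b', dist (F b) (F b') < ε / 2) (a : A)
    (h : ∀ i, ∃ b b', |F b i| ≤ |F b i - F b' i|) : ‖F a‖ < ε := by
  rw [pi_norm_lt_iff hε]
  intro i
  obtain ⟨b, b', k1⟩ := h i
  have k2 := lt_of_le_of_lt (dist_le_pi_dist (F b) (F b') i) (hclose b b')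
  have k3 := lt_of_le_of_lt (dist_le_pi_dist (F a) (F b) i) (hclose a b)
  rw [Real.dist_eq] at k2 k3
  rw [Real.norm_eq_abs]
  have k4 := abs_add_le (F a i - F b i) (F b i)
  rw [sub_add_cancel] at k4
  linarith

set_option maxHeartbeats 1000000 in
lemma final_topo {X : Type*} [TopologicalSpace X] (ρ : X → X) (hρ : ∀ x, ρ (ρ x) = x) (d : ℕ)
    (φ : (Fin d → ℝ) → X)
    (hφ : ContinuousOn φ (closedBall 0 1)) (hg : Good ρ d φ) (H : X × ℝ → (Fin (d+1) → ℝ))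
    (hH : Continuous H) (hnz : ∀ x t, |t| ≤ 1 → H (x, t) ≠ 0)
    (h1 : ∀ x t, H (ρ x, -t) = H (x, t)) (h2 : ∀ x, H (x, -1) = - H (x, 1)) : False := by
  let g : (Fin (d+1) → ℝ) → (Fin (d+1) → ℝ) := fun x => H (φ (fun i => x i.succ), x 0)
  have hgc : ContinuousOn g (closedBall 0 1) := by
    refine hH.comp_continuousOn (ContinuousOn.prodMk (hφ.comp (by fun_prop) ?_) (by fun_prop))
    intro x hx
    have hx' : ∀ i, |x i| ≤ 1 := (cube_iff x).1 (by simpa using hx)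
    have : ‖fun i : Fin d => x i.succ‖ ≤ 1 := (cube_iff _).2 fun i => hx' _
    simpa using this
  have hcomp : IsCompact (closedBall (0 : Fin (d+1) → ℝ) 1) := isCompact_closedBall _ _
  have hmem : ∀ x : Fin (d+1) → ℝ, (∀ i, |x i| ≤ 1) → x ∈ closedBall (0 : Fin (d+1) → ℝ) 1 := by
    intro x hx
    simpa using (cube_iff x).2 hx
  have hg0 : ∀ x : Fin (d+1) → ℝ, (∀ i, |x i| ≤ 1) → g x ≠ 0 := fun x hx => hnz _ _ (hx 0)
  obtain ⟨x₀, hx₀, hmin⟩ := hcomp.exists_isMinOn ⟨0, by simp⟩ hgc.norm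
  have hε : 0 < ‖g x₀‖ := norm_pos_iff.2 (hg0 _ ((cube_iff _).1 (by simpa using hx₀)))
  have huc := hcomp.uniformContinuousOn_of_continuous hgc
  rw [Metric.uniformContinuousOn_iff] at huc
  obtain ⟨δ, hδ, hu⟩ := huc (‖g x₀‖ / 2) (by linarith)
  obtain ⟨n, hn⟩ := exists_nat_one_div_lt hδ
  have hgins : ∀ t (y : Fin d → ℝ), g (ins 0 t y) = H (φ y, t) := by
    intro t y
    simp only [g, ins_zero_succ]
    simp [ins]
  have hGd : Good nzNeg d (fun y => toNZ (g (ins 0 1 y))) := by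
    have := Good_map ρ nzNeg (fun x => toNZ (H (x, 1))) (fun x => by
      have e : H (ρ x, 1) = - H (x, 1) := by
        have := h1 x (-1)
        rw [neg_neg] at this
        rw [this, h2]
      simp only [e]
      exact toNZ_neg _ (hnz _ _ (by simp))) d φ hg
    simpa only [hgins] using this
  have heq := Good_equiv ρ hρ d φ hg
  obtain ⟨e, he⟩ := final_comb (M := n+1) (Nat.succ_pos n) sg nzNeg sg_neg d (fun x => toNZ (g x)) hGd
    (by
      intro y hy
      simp only [hgins, h2]
      exact toNZ_neg _ (hnz _ _ (by simp)))
    (by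
      rintro y hy ⟨i, hi⟩
      congr 1
      have q := heq (fun i => y i.succ) (fun i => hy _) ⟨i, hi⟩
      have : g (-y) = H (φ (-(fun i => y i.succ)), -(y 0)) := rfl
      rw [this, q, h1])
  let v : (Fin (d+1) → Bool) → (Fin (d+1) → ℝ) := fun b i => pt (n+1) (e i) (b i)
  have hv : ∀ b i, |v b i| ≤ 1 := fun b i => pt_abs _ _
  have hclose : ∀ b b', dist (g (v b)) (g (v b')) < ‖g x₀‖ / 2 := by
    intro b b'
    refine hu _ (hmem _ (hv b)) _ (hmem _ (hv b')) ?_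
    rw [dist_pi_lt_iff hδ]
    intro i
    rw [Real.dist_eq]
    refine lt_of_le_of_lt (pt_close _ _ _) ?_
    push_cast
    exact hn
  have hcell : ∀ b, (cell (fun x => toNZ (g x)) e b).1 = g (v b) :=
    fun b => toNZ_val _ (hg0 _ (hv b))
  have hmin' : ∀ b, ‖g x₀‖ ≤ ‖g (v b)‖ := fun b => hmin (hmem _ (hv b))
  have hfin : ∀ i : Fin (d+1), ∃ b b', |g (v b) i| ≤ |g (v b) i - g (v b') i| := by
    intro i
    obtain ⟨b, b', hb⟩ := he i i.2
    have k1 := sg_ne i _ _ hb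
    rw [hcell, hcell] at k1
    exact ⟨b, b', k1⟩
  clear_value v g
  exact absurd (hmin' fun _ => true)
    (not_le.2 (norm_est (fun b => g (v b)) ‖g x₀‖ hε hclose (fun _ => true) hfin))

end Analysis

section GraphMap

variable {r m : ℕ} {G : Graph}

open Classical in
def Pf (c : G.V → Fin m) (f : HomComplex (oddCycle r) G) (j : ℤ) (col : Fin m) : ℝ :=
  ∑ w, if c w = col then f.1 (j : ZMod (2 * r + 1)) w else 0

def Ef (c : G.V → Fin m) (f : HomComplex (oddCycle r) G) (j : ℤ) (col : Fin m) : ℝ :=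
  (-1 : ℝ) ^ j * (Pf c f j col - Pf c f (j+1) col)

def hat (u : ℝ) : ℝ := max 0 (1 - |u|)

def Hf (c : G.V → Fin m) (f : HomComplex (oddCycle r) G) (τ : ℝ) (col : Fin m) : ℝ :=
  ∑ j ∈ Finset.Icc (-2 - r : ℤ) (r + 1), hat (τ - j) * Ef c f j col

lemma Pf_sum (c : G.V → Fin m) (f : HomComplex (oddCycle r) G) (j : ℤ) :
    ∑ col, Pf c f j col = 1 := by
  unfold Pf
  rw [Finset.sum_comm]
  simp only [Finset.sum_ite_eq, Finset.mem_univ, if_true]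
  exact f.2.2.1 _

lemma Pf_adj (c : G.V → Fin m) (hc : ∀ a b, G.adj a b → c a ≠ c b)
    (f : HomComplex (oddCycle r) G) (i j : ℤ) (hij : i = j + 1 ∨ j = i + 1) (b : G.V)
    (hb : f.1 (j : ZMod (2 * r + 1)) b ≠ 0) : Pf c f i (c b) = 0 := by
  unfold Pf
  refine Finset.sum_eq_zero fun w _ => ?_
  split_ifs with h
  · by_contra hw
    refine hc w b (f.2.2.2 _ _ ?_ w b hw hb) h
    rcases hij with rfl | rfl
    · left; push_cast; rfl
    · right; push_cast; rfl
  · rfl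

lemma Pf_pos (c : G.V → Fin m) (f : HomComplex (oddCycle r) G) (j : ℤ) (b : G.V)
    (hb : f.1 (j : ZMod (2 * r + 1)) b ≠ 0) : 0 < Pf c f j (c b) := by
  unfold Pf
  refine Finset.sum_pos' (fun w _ => ?_) ⟨b, Finset.mem_univ _, ?_⟩
  · split_ifs
    · exact f.2.1 _ _
    · exact le_rfl
  · rw [if_pos rfl]
    exact lt_of_le_of_ne (f.2.1 _ _) hb.symm

lemma Pf_reflect (c : G.V → Fin m) (f : HomComplex (oddCycle r) G) (j : ℤ) (col : Fin m) :
    Pf c (precompHom (cycleReflect r) G f) j col = Pf c f (-j) col := by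
  unfold Pf
  refine Finset.sum_congr rfl fun w _ => ?_
  have : (precompHom (cycleReflect r) G f).1 (j : ZMod (2 * r + 1)) w
      = f.1 ((-j : ℤ) : ZMod (2 * r + 1)) w := by
    rw [Int.cast_neg]; rfl
  rw [this]

lemma Ef_reflect (c : G.V → Fin m) (f : HomComplex (oddCycle r) G) (j : ℤ) (col : Fin m) :
    Ef c (precompHom (cycleReflect r) G f) j col = Ef c f (-1 - j) col := by
  unfold Ef
  rw [Pf_reflect, Pf_reflect]
  have e1 : -(j+1) = -1 - j := by ring
  have e2 : -1 - j + 1 = -j := by ring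
  rw [e1, e2]
  have e3 : (-1 : ℝ) ^ (-1 - j) = - (-1) ^ j := by
    rw [zpow_sub₀ (by norm_num)]
    rcases Int.even_or_odd j with h | h
    · rw [h.neg_one_zpow]; norm_num
    · rw [h.neg_one_zpow]; norm_num
  rw [e3]; ring

lemma Ef_end (c : G.V → Fin m) (f : HomComplex (oddCycle r) G) (col : Fin m) :
    Ef c f (-1 - r) col = - Ef c f r col := by
  have hp : ∀ a b : ℤ, ((a : ZMod (2 * r + 1)) = b) → Pf c f a col = Pf c f b col := by
    intro a b h
    unfold Pf
    rw [h]
  have hz : ((2 * r + 1 : ℕ) : ZMod (2 * r + 1)) = 0 := ZMod.natCast_self _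
  have e1 : Pf c f (-1 - r) col = Pf c f r col := by
    apply hp; push_cast at hz ⊢; linear_combination -hz
  have e2 : Pf c f (-1 - r + 1) col = Pf c f (r + 1) col := by
    apply hp; push_cast at hz ⊢; linear_combination -hz
  unfold Ef
  rw [e1, e2]
  have e3 : (-1 : ℝ) ^ (-1 - (r : ℤ)) = - (-1) ^ (r : ℤ) := by
    rw [zpow_sub₀ (by norm_num)]
    rcases Int.even_or_odd (r : ℤ) with h | h
    · rw [h.neg_one_zpow]; norm_num
    · rw [h.neg_one_zpow]; norm_num
  rw [e3]; ring

lemma Hf_reflect (c : G.V → Fin m) (f : HomComplex (oddCycle r) G) (τ : ℝ) (col : Fin m) :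
    Hf c (precompHom (cycleReflect r) G f) τ col = Hf c f (-1 - τ) col := by
  unfold Hf
  refine Finset.sum_nbij' (fun j => -1 - j) (fun j => -1 - j) ?_ ?_ ?_ ?_ ?_
  · intro j hj
    rw [Finset.mem_Icc] at hj ⊢
    omega
  · intro j hj
    rw [Finset.mem_Icc] at hj ⊢
    omega
  · intro j _; ring
  · intro j _; ring
  · intro j _
    rw [Ef_reflect]
    congr 1
    unfold hat
    have : -1 - τ - ((-1 - j : ℤ) : ℝ) = -(τ - j) := by push_cast; ring
    rw [this, abs_neg]

lemma Hf_interp (c : G.V → Fin m) (f : HomComplex (oddCycle r) G) (j : ℤ) (s : ℝ)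
    (hj : -2 - (r : ℤ) ≤ j) (hj' : j ≤ r) (hs : 0 ≤ s) (hs' : s ≤ 1) (col : Fin m) :
    Hf c f (j + s) col = (1 - s) * Ef c f j col + s * Ef c f (j+1) col := by
  unfold Hf
  have hsub : ({j, j+1} : Finset ℤ) ⊆ Finset.Icc (-2 - r : ℤ) (r + 1) := by
    intro i hi
    simp only [Finset.mem_insert, Finset.mem_singleton] at hi
    rw [Finset.mem_Icc]
    omega
  rw [← Finset.sum_subset hsub, Finset.sum_pair (by omega)]
  · congr 2
    · have : (j : ℝ) + s - j = s := by ring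
      rw [this]; unfold hat
      rw [abs_of_nonneg hs, max_eq_right (by linarith)]
    · have : (j : ℝ) + s - ((j + 1 : ℤ) : ℝ) = -(1 - s) := by push_cast; ring
      rw [this]; unfold hat
      rw [abs_neg, abs_of_nonneg (by linarith), max_eq_right (by linarith)]
      ring
  · intro i _ hi
    simp only [Finset.mem_insert, Finset.mem_singleton, not_or] at hi
    have : hat ((j : ℝ) + s - i) = 0 := by
      unfold hat
      apply max_eq_left
      have : 1 ≤ |(j : ℝ) + s - i| := by
        rcases lt_or_gt_of_ne hi.1 with h | h
        · have h' : (i : ℝ) + 1 ≤ j := by exact_mod_cast h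
          exact le_trans (by linarith) (le_abs_self _)
        · have h' : (j : ℝ) + 1 + 1 ≤ i := by
            have : j + 1 + 1 ≤ i := by omega
            exact_mod_cast this
          exact le_trans (by linarith) (neg_le_abs _)
      linarith
    rw [this, zero_mul]

lemma Hf_ne (c : G.V → Fin m) (hc : ∀ a b, G.adj a b → c a ≠ c b)
    (f : HomComplex (oddCycle r) G) (j : ℤ) (s : ℝ)
    (hj : -2 - (r : ℤ) ≤ j) (hj' : j ≤ r) (hs : 0 ≤ s) (hs' : s ≤ 1) :
    ∃ col, Hf c f (j + s) col ≠ 0 := by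
  have hex : ∃ b, f.1 ((j + 1 : ℤ) : ZMod (2 * r + 1)) b ≠ 0 := by
    by_contra hcon
    push Not at hcon
    have := f.2.2.1 ((j + 1 : ℤ) : ZMod (2 * r + 1))
    rw [Finset.sum_eq_zero (fun w _ => hcon w)] at this
    exact zero_ne_one this
  obtain ⟨b, hb⟩ := hex
  refine ⟨c b, ?_⟩
  rw [Hf_interp c f j s hj hj' hs hs']
  unfold Ef
  rw [Pf_adj c hc f j (j+1) (Or.inr rfl) b hb, Pf_adj c hc f (j+1+1) (j+1) (Or.inl rfl) b hb,
    zpow_add_one₀ (by norm_num)]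
  have hp := Pf_pos c f (j+1) b hb
  have hz : (-1 : ℝ) ^ j ≠ 0 := zpow_ne_zero _ (by norm_num)
  have : (1 - s) * ((-1 : ℝ) ^ j * (0 - Pf c f (j+1) (c b)))
      + s * ((-1) ^ j * -1 * (Pf c f (j+1) (c b) - 0)) = - ((-1) ^ j * Pf c f (j+1) (c b)) := by
    ring
  rw [this]
  exact neg_ne_zero.2 (mul_ne_zero hz hp.ne')

lemma Hf_sum (c : G.V → Fin m) (f : HomComplex (oddCycle r) G) (τ : ℝ) :
    ∑ col, Hf c f τ col = 0 := by
  unfold Hf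
  rw [Finset.sum_comm]
  refine Finset.sum_eq_zero fun j _ => ?_
  rw [← Finset.mul_sum]
  unfold Ef
  rw [← Finset.mul_sum, Finset.sum_sub_distrib, Pf_sum, Pf_sum]
  simp

lemma Hf_cont (c : G.V → Fin m) (col : Fin m) :
    Continuous (fun z : HomComplex (oddCycle r) G × ℝ => Hf c z.1 z.2 col) := by
  have hP : ∀ j, Continuous (fun z : HomComplex (oddCycle r) G × ℝ => Pf c z.1 j col) := by
    intro j
    unfold Pf
    refine continuous_finsetSum _ fun w _ => ?_
    split_ifs
    · exact (continuous_apply w).comp ((continuous_apply (j : ZMod (2 * r + 1))).comp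
        (continuous_subtype_val.comp continuous_fst))
    · exact continuous_const
  unfold Hf
  refine continuous_finsetSum _ fun j _ => ?_
  refine Continuous.mul ?_ (continuous_const.mul ((hP _).sub (hP _)))
  exact continuous_const.max (continuous_const.sub (continuous_snd.sub continuous_const).abs)

lemma no_coloring (d : ℕ) (c : G.V → Fin (d + 2)) (hc : ∀ a b, G.adj a b → c a ≠ c b)
    (φ : (Fin d → ℝ) → HomComplex (oddCycle r) G)
    (hφ : ContinuousOn φ (Metric.closedBall 0 1))
    (hg : Good (fun f => precompHom (cycleReflect r) G f) d φ) : False := by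
  refine final_topo (fun f => precompHom (cycleReflect r) G f)
    (precompHom_invol _ (cycleReflect_invol r) G) d φ hφ hg
    (fun z i => Hf c z.1 (-1/2 + (r + 1/2) * z.2) i.castSucc) ?_ ?_ ?_ ?_
  · refine continuous_pi fun i => ?_
    exact (Hf_cont c i.castSucc).comp (continuous_fst.prodMk
      (continuous_const.add (continuous_const.mul continuous_snd)))
  · intro f t ht h0
    rw [abs_le] at ht
    set τ : ℝ := -1/2 + (r + 1/2) * t with hτ
    have hr0 : (0:ℝ) ≤ r := Nat.cast_nonneg r
    have hlo : -1 - (r:ℝ) ≤ τ := by rw [hτ]; nlinarith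
    have hhi : τ ≤ r := by rw [hτ]; nlinarith
    obtain ⟨col, hcol⟩ := Hf_ne c hc f ⌊τ⌋ (Int.fract τ)
      (by
        have : -1 - (r:ℤ) ≤ ⌊τ⌋ := by rw [Int.le_floor]; push_cast; exact hlo
        omega)
      (by
        have : (⌊τ⌋ : ℝ) ≤ r := (Int.floor_le τ).trans hhi
        exact_mod_cast this)
      (Int.fract_nonneg _) (Int.fract_lt_one _).le
    rw [Int.floor_add_fract] at hcol
    have h0' : ∀ i : Fin (d+1), Hf c f τ i.castSucc = 0 := fun i => congrFun h0 i
    have hs := Hf_sum c f τ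
    rw [Fin.sum_univ_castSucc] at hs
    simp only [h0', Finset.sum_const_zero, zero_add] at hs
    induction col using Fin.lastCases with
    | last => exact hcol hs
    | cast i => exact hcol (h0' i)
  · intro f t
    funext i
    show Hf c (precompHom (cycleReflect r) G f) _ _ = Hf c f _ _
    rw [Hf_reflect]
    congr 1
    ring
  · intro f
    funext i
    show Hf c f _ _ = - Hf c f _ _
    have e1 : (-1/2 + ((r:ℝ) + 1/2) * (-1)) = ((-1 - r : ℤ) : ℝ) + 0 := by push_cast; ring
    have e2 : (-1/2 + ((r:ℝ) + 1/2) * 1) = ((r : ℤ) : ℝ) + 0 := by push_cast; ring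
    rw [e1, e2, Hf_interp c f _ 0 (by omega) (by omega) le_rfl zero_le_one,
      Hf_interp c f _ 0 (by omega) (by omega) le_rfl zero_le_one, Ef_end]
    ring

end GraphMap


/-- **The Lovász Conjecture** (Babson–Kozlov).  If `Hom(C_{2r+1}, G)` is `k`-connected for some
`r ≥ 1`, `k ≥ -1`, and `G` is a loopless graph, then `χ(G) ≥ k + 4`. -/
theorem lovasz_conjecture (r : ℕ) (hr : 1 ≤ r) (k : ℤ) (hk : -1 ≤ k)
    (G : Graph) (hG : G.Loopless)
    (hconn : KConnected k (HomComplex (oddCycle r) G)) :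
    k + 4 ≤ (chromaticNumber G : ℤ) := by
  obtain ⟨hne, hpc, hpi⟩ := hconn
  by_contra hlt
  have hset : {n : ℕ | Nonempty (GraphHom G (completeGraph n))}.Nonempty := by
    refine ⟨Fintype.card G.V, ⟨⟨fun v => Fintype.equivFin G.V v, ?_⟩⟩⟩
    intro x y hxy h
    have := (Fintype.equivFin G.V).injective h
    subst this
    exact hG _ hxy
  obtain ⟨c⟩ := Nat.sInf_mem hset
  change GraphHom G (completeGraph (chromaticNumber G)) at c
  obtain ⟨d, hd⟩ : ∃ d : ℕ, (d : ℤ) = k + 1 := ⟨(k+1).toNat, Int.toNat_of_nonneg (by omega)⟩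
  have hle : chromaticNumber G ≤ d + 2 := by omega
  obtain ⟨φ, hφ, hg⟩ := exists_good (fun f => precompHom (cycleReflect r) G f)
    (precompHom (cycleReflect r) G).continuous
    (precompHom_invol _ (cycleReflect_invol r) G) hne d (fun h => hpc (by omega))
    (fun i hi hi' => hpi i hi (by omega))
  refine no_coloring d (fun v => Fin.castLE hle (c.1 v)) ?_ φ hφ hg
  intro a b hab h
  exact c.2 a b hab (Fin.castLE_injective hle h)

end Lovasz
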